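/- There is an absolute constant C such that: for every integer N ≥ 2, every real α, and all integers a, q with q ≥ 1, gcd(a,q) = 1 and |α − a/q| ≤ 1/q², one has |S₁(N,α)| ≤ C · N (log N)⁴ (q^{−1/2} + N^{−1/5} + q^{1/2} N^{−1/2}). -/

import Mathlib

/-- `e(x) = exp(2πix)`. -/
noncomputable def eexp (x : ℝ) : ℂ := Complex.exp (2 * Real.pi * Complex.I * x)

/-- `S₁(N,α) = Σ_{p ≤ N, p prime} e(αp)`. -/
noncomputable def S₁ (N : ℕ) (α : ℝ) : ℂ :=
  ∑ p ∈ (Finset.range (N + 1)).filter (fun p => Nat.Prime p), eexp (α * (p : ℝ))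

namespace MinorArc
open Finset

lemma norm_eexp (x : ℝ) : ‖eexp x‖ = 1 := by
  unfold eexp
  have : (2 * Real.pi * Complex.I * x : ℂ) = ((2 * Real.pi * x : ℝ) : ℂ) * Complex.I := by
    push_cast; ring
  rw [this, Complex.norm_exp_ofReal_mul_I]

lemma eexp_add (x y : ℝ) : eexp (x + y) = eexp x * eexp y := by
  unfold eexp
  rw [← Complex.exp_add]
  push_cast
  ring_nf

lemma eexp_int (m : ℤ) : eexp m = 1 := by
  unfold eexp
  rw [Complex.exp_eq_one_iff]
  exact ⟨m, by push_cast; ring⟩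

lemma conj_eexp (x : ℝ) : (starRingEnd ℂ) (eexp x) = eexp (-x) := by
  unfold eexp
  rw [← Complex.exp_conj]
  simp [Complex.conj_ofNat]

lemma eexp_sub_one (θ : ℝ) : 4 * |θ - round θ| ≤ ‖eexp θ - 1‖ := by
  set t := θ - round θ with ht
  have h1 : eexp θ = eexp t := by
    have : θ = t + round θ := by rw [ht]; ring
    rw [this, eexp_add, eexp_int]; simp [ht]
  have h2 : |t| ≤ 1 / 2 := abs_sub_round θ
  have h3 : eexp t = Complex.exp (Complex.I * ((2 * Real.pi * t : ℝ) : ℂ)) := by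
    unfold eexp; push_cast; ring_nf
  rw [h1, h3, Complex.norm_exp_I_mul_ofReal_sub_one]
  have h4 : 2 * Real.pi * t / 2 = Real.pi * t := by ring
  rw [h4, norm_mul, Real.norm_eq_abs, Real.norm_eq_abs]
  have hpi := Real.pi_pos
  have h5 : |Real.sin (Real.pi * t)| = Real.sin (Real.pi * |t|) := by
    have h6 : 0 ≤ Real.sin (Real.pi * |t|) := by
      apply Real.sin_nonneg_of_nonneg_of_le_pi
      · positivity
      · nlinarith
    rcases abs_cases t with ⟨h, _⟩ | ⟨h, _⟩
    · rw [h] at h6 ⊢; exact abs_of_nonneg h6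
    · rw [h] at h6 ⊢
      rw [mul_neg, Real.sin_neg] at h6 ⊢
      exact abs_of_nonpos (by linarith)
  rw [h5]
  have h7 := Real.mul_le_sin (x := Real.pi * |t|) (by positivity) (by nlinarith)
  have h8 : 2 / Real.pi * (Real.pi * |t|) = 2 * |t| := by field_simp
  rw [h8] at h7
  rw [abs_of_nonneg (by norm_num : (0:ℝ) ≤ 2)]
  linarith

lemma geom_bound (θ : ℝ) (a b : ℕ) :
    ‖∑ u ∈ Ico a b, eexp (θ * u)‖ * |θ - round θ| ≤ 1 := by
  rcases le_total b a with hab | hab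
  · rw [Ico_eq_empty_of_le hab]; simp
  have h1 : (eexp θ - 1) * ∑ u ∈ Ico a b, eexp (θ * u) = eexp (θ * b) - eexp (θ * a) := by
    rw [← Finset.sum_Ico_sub (fun n : ℕ => eexp (θ * n)) hab, mul_sum]
    refine sum_congr rfl fun u _ => ?_
    have : eexp (θ * ((u + 1 : ℕ) : ℝ)) = eexp θ * eexp (θ * u) := by
      rw [← eexp_add]; congr 1; push_cast; ring
    rw [this]; ring
  have h2 : ‖eexp θ - 1‖ * ‖∑ u ∈ Ico a b, eexp (θ * u)‖ ≤ 2 := by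
    rw [← norm_mul, h1]
    refine (norm_sub_le _ _).trans ?_
    rw [norm_eexp, norm_eexp]; norm_num
  have h3 := eexp_sub_one θ
  have h4 := norm_nonneg (∑ u ∈ Ico a b, eexp (θ * u))
  nlinarith [mul_le_mul_of_nonneg_right h3 h4]

lemma geom_trivial (θ : ℝ) (s : Finset ℕ) :
    ‖∑ u ∈ s, eexp (θ * u)‖ ≤ #s := by
  refine (norm_sum_le _ _).trans ?_
  simp [norm_eexp]

/-- Abel summation with antitone nonnegative weights. -/
lemma abel_antitone (w : ℕ → ℝ) (z : ℕ → ℂ) (B : ℝ) (n : ℕ)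
    (hw : ∀ i, i < n → w (i + 1) ≤ w i) (hw0 : 0 ≤ w n)
    (hB : ∀ m ≤ n + 1, ‖∑ i ∈ range m, z i‖ ≤ B) :
    ‖∑ i ∈ range (n + 1), (w i : ℂ) * z i‖ ≤ w 0 * B := by
  have key : ∀ k ≤ n, ‖∑ i ∈ range (k + 1), (w i : ℂ) * z i
      - (w k : ℂ) * ∑ i ∈ range (k + 1), z i‖ ≤ (w 0 - w k) * B := by
    intro k
    induction k with
    | zero => intro _; simp
    | succ k ih =>
      intro hk
      have h1 := ih (by omega)
      have h2 := hB (k + 1) (by omega)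
      have h3 := hw k (by omega)
      have h4 : ∑ i ∈ range (k + 1 + 1), (w i : ℂ) * z i
          - (w (k + 1) : ℂ) * ∑ i ∈ range (k + 1 + 1), z i
          = (∑ i ∈ range (k + 1), (w i : ℂ) * z i - (w k : ℂ) * ∑ i ∈ range (k + 1), z i)
            + ((w k - w (k + 1) : ℝ) : ℂ) * ∑ i ∈ range (k + 1), z i := by
        rw [sum_range_succ _ (k + 1), sum_range_succ _ (k + 1)]
        push_cast; ring
      rw [h4]
      refine (norm_add_le _ _).trans ?_
      rw [norm_mul, Complex.norm_real, Real.norm_eq_abs, abs_of_nonneg (by linarith)]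
      nlinarith [mul_le_mul_of_nonneg_left h2 (by linarith : 0 ≤ w k - w (k + 1))]
  have h1 := key n le_rfl
  have h2 := hB (n + 1) le_rfl
  have h3 : ∑ i ∈ range (n + 1), (w i : ℂ) * z i
      = (∑ i ∈ range (n + 1), (w i : ℂ) * z i - (w n : ℂ) * ∑ i ∈ range (n + 1), z i)
        + (w n : ℂ) * ∑ i ∈ range (n + 1), z i := by ring
  rw [h3]
  refine (norm_add_le _ _).trans ?_
  rw [norm_mul, Complex.norm_real, Real.norm_eq_abs, abs_of_nonneg hw0]
  nlinarith [mul_le_mul_of_nonneg_left h2 hw0]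

lemma harmonic_bound (n : ℕ) : ∑ i ∈ Ioc 0 n, (1 : ℝ) / i ≤ 1 + Real.log n := by
  have h := harmonic_le_one_add_log n
  rw [harmonic_eq_sum_Icc] at h
  push_cast at h
  have : Ioc 0 n = Icc 1 n := by ext; simp; omega
  rw [this]
  simpa using h

lemma spacing {α : ℝ} {a : ℤ} {q : ℕ} (hq : 1 ≤ q) (hg : Int.gcd a q = 1)
    (hα : |α - (a : ℝ) / (q : ℝ)| ≤ 1 / (q : ℝ) ^ 2) (j : ℕ) (hj : 1 ≤ j) (hjq : 2 * j ≤ q)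
    (m : ℤ) : 1 / (2 * (q : ℝ)) ≤ |α * j - m| := by
  have hq0 : (0 : ℝ) < q := by exact_mod_cast hq
  have hne : a * j - m * q ≠ 0 := by
    intro h
    have hd : (q : ℤ) ∣ a * j := ⟨m, by linarith⟩
    have hc : IsCoprime (q : ℤ) a := by
      rw [Int.isCoprime_iff_gcd_eq_one, Int.gcd_comm]; exact hg
    have := hc.dvd_of_dvd_mul_left hd
    have h2 : q ∣ j := by exact_mod_cast this
    have := Nat.le_of_dvd (by omega) h2
    omega
  have h1 : (1 : ℝ) ≤ |(a : ℝ) * j - m * q| := by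
    have := Int.one_le_abs hne
    exact_mod_cast this
  have h2 : |(a : ℝ) / q * j - m| = |(a : ℝ) * j - m * q| / q := by
    rw [← abs_of_pos hq0, ← abs_div, abs_of_pos hq0]
    congr 1; field_simp
  have h3 : 1 / (q : ℝ) ≤ |(a : ℝ) / q * j - m| := by
    rw [h2]; gcongr
  have h4 : |(α - a / q) * j| ≤ 1 / (2 * q) := by
    rw [abs_mul, abs_of_nonneg (by positivity : (0 : ℝ) ≤ (j : ℝ))]
    have hj2 : (j : ℝ) ≤ q / 2 := by
      have : (2 * j : ℝ) ≤ q := by exact_mod_cast hjq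
      linarith
    calc _ ≤ 1 / (q : ℝ) ^ 2 * (q / 2) := by gcongr
      _ = _ := by field_simp
  have h5 : (a : ℝ) / q * j - m = (α * j - m) - (α - a / q) * j := by ring
  rw [h5] at h3
  have h6 := abs_sub (α * j - m) ((α - a / q) * j)
  have h7 : 1 / (q : ℝ) = 1 / (2 * q) + 1 / (2 * q) := by field_simp; norm_num
  linarith

lemma block {α : ℝ} {a : ℤ} {q : ℕ} (hq : 1 ≤ q) (hg : Int.gcd a q = 1)
    (hα : |α - (a : ℝ) / (q : ℝ)| ≤ 1 / (q : ℝ) ^ 2) (β : ℝ) (F : ℕ → ℝ) (X : ℝ) (hX : 0 ≤ X)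
    (k0 : ℕ) (h1 : ∀ k ∈ Ico k0 (k0 + (q / 2 + 1)), F k ≤ X)
    (h2 : ∀ k ∈ Ico k0 (k0 + (q / 2 + 1)),
      F k * |(α * k + β) - round (α * k + β)| ≤ 1) :
    ∑ k ∈ Ico k0 (k0 + (q / 2 + 1)), F k ≤ 2 * X + 4 * q * (1 + Real.log (2 * q)) := by
  have hq0 : (0 : ℝ) < q := by exact_mod_cast hq
  set f : ℕ → ℕ := fun k => ⌊2 * (q : ℝ) * Int.fract (α * k + β)⌋₊ with hf
  set v : ℕ → ℝ := fun i => if i = 0 then X else 2 * q / i with hv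
  set w : ℕ → ℝ := fun i => v i + v (2 * q - 1 - i) with hw
  have hv0 : ∀ i, 0 ≤ v i := by
    intro i; simp only [hv]; split_ifs
    · exact hX
    · positivity
  have hfl : ∀ k : ℕ, (f k : ℝ) ≤ 2 * q * Int.fract (α * k + β) := fun k =>
    Nat.floor_le (by have := Int.fract_nonneg (α * k + β); positivity)
  have hfu : ∀ k : ℕ, 2 * q * Int.fract (α * k + β) < f k + 1 := fun k => Nat.lt_floor_add_one _
  have hflt : ∀ k, f k < 2 * q := by
    intro k
    have h := hfl k
    have h' := Int.fract_lt_one (α * k + β)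
    have : (f k : ℝ) < (2 * q : ℕ) := by
      push_cast; nlinarith
    exact_mod_cast this
  have hinj' : ∀ k k', k0 ≤ k → k < k' → k' < k0 + (q / 2 + 1) → f k ≠ f k' := by
    intro k k' hk hkk hk' heq
    have e1 := hfl k; have e2 := hfu k; have e3 := hfl k'; have e4 := hfu k'
    rw [heq] at e1 e2
    have hs := spacing hq hg hα (k' - k) (by omega) (by omega)
      (⌊α * k' + β⌋ - ⌊α * k + β⌋)
    have e5 : α * ((k' - k : ℕ) : ℝ) - ((⌊α * k' + β⌋ - ⌊α * k + β⌋ : ℤ) : ℝ)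
        = Int.fract (α * k' + β) - Int.fract (α * k + β) := by
      rw [Nat.cast_sub hkk.le, Int.fract, Int.fract]; push_cast; ring
    rw [e5] at hs
    have e6 : |Int.fract (α * k' + β) - Int.fract (α * k + β)| < 1 / (2 * q) := by
      rw [lt_div_iff₀ (by positivity)]
      rcases abs_cases (Int.fract (α * k' + β) - Int.fract (α * k + β)) with ⟨h, _⟩ | ⟨h, _⟩ <;>
      · rw [h]; nlinarith
    linarith
  have hinj : Set.InjOn f (Ico k0 (k0 + (q / 2 + 1)) : Finset ℕ) := by
    intro k hk k' hk' heq
    simp only [coe_Ico, Set.mem_Ico] at hk hk'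
    rcases lt_trichotomy k k' with h | h | h
    · exact absurd heq (hinj' k k' hk.1 h hk'.2)
    · exact h
    · exact absurd heq.symm (hinj' k' k hk'.1 h hk.2)
  have hFw : ∀ k ∈ Ico k0 (k0 + (q / 2 + 1)), F k ≤ w (f k) := by
    intro k hk
    have a1 := h1 k hk
    have a2 := h2 k hk
    rw [abs_sub_round_eq_min] at a2
    have b1 := hfl k; have b2 := hfu k; have b3 := hflt k
    set t := Int.fract (α * k + β)
    set i := f k
    have c1 := hv0 i; have c2 := hv0 (2 * q - 1 - i)
    simp only [hw]
    rcases le_total t (1 - t) with ht | ht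
    · rw [min_eq_left ht] at a2
      have : F k ≤ v i := by
        simp only [hv]
        split_ifs with hi
        · exact a1
        · have hi0 : (0 : ℝ) < i := by exact_mod_cast Nat.pos_of_ne_zero hi
          rw [le_div_iff₀ hi0]
          rcases le_total (F k) 0 with h | h
          · nlinarith
          · nlinarith [mul_le_mul_of_nonneg_left b1 h]
      linarith
    · rw [min_eq_right ht] at a2
      have : F k ≤ v (2 * q - 1 - i) := by
        simp only [hv]
        split_ifs with hi
        · exact a1
        · have hi0 : (0 : ℝ) < ((2 * q - 1 - i : ℕ) : ℝ) := by
            exact_mod_cast Nat.pos_of_ne_zero hi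
          have hcast : ((2 * q - 1 - i : ℕ) : ℝ) = 2 * q - 1 - i := by
            rw [Nat.cast_sub (by omega), Nat.cast_sub (by omega)]; push_cast; ring
          rw [le_div_iff₀ hi0]
          rw [hcast] at hi0 ⊢
          have b4 : 2 * (q : ℝ) - 1 - i ≤ 2 * q * (1 - t) := by linarith
          rcases le_total (F k) 0 with h | h
          · nlinarith
          · nlinarith [mul_le_mul_of_nonneg_left b4 h]
      linarith
  have hsum1 : ∑ k ∈ Ico k0 (k0 + (q / 2 + 1)), F k ≤ ∑ i ∈ range (2 * q), w i := by
    refine (sum_le_sum hFw).trans ?_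
    rw [← sum_image (f := w) (g := f) (fun x hx y hy h => hinj hx hy h)]
    refine sum_le_sum_of_subset_of_nonneg ?_ ?_
    · intro i hi
      simp only [mem_image] at hi
      obtain ⟨k, _, rfl⟩ := hi
      exact mem_range.2 (hflt k)
    · intro i _ _
      exact add_nonneg (hv0 _) (hv0 _)
  have hsum2 : ∑ i ∈ range (2 * q), w i = 2 * ∑ i ∈ range (2 * q), v i := by
    simp only [hw]
    rw [sum_add_distrib, sum_range_reflect]; ring
  have hsum3 : ∑ i ∈ range (2 * q), v i ≤ X + 2 * q * (1 + Real.log (2 * q)) := by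
    have e1 : range (2 * q) ⊆ insert 0 (Ioc 0 (2 * q)) := by
      intro i hi; simp at hi ⊢; omega
    refine (sum_le_sum_of_subset_of_nonneg e1 (fun i _ _ => hv0 i)).trans ?_
    rw [sum_insert (by simp)]
    have e2 : ∑ i ∈ Ioc 0 (2 * q), v i = 2 * q * ∑ i ∈ Ioc 0 (2 * q), (1 : ℝ) / i := by
      rw [mul_sum]
      refine sum_congr rfl fun i hi => ?_
      simp only [mem_Ioc] at hi
      simp only [hv]
      rw [if_neg (by omega)]; ring
    rw [e2]
    have e3 := harmonic_bound (2 * q)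
    push_cast at e3
    have e4 : v 0 = X := by simp [hv]
    rw [e4]
    gcongr
  linarith

end MinorArc

namespace MinorArc
open Finset

lemma half_le (q : ℕ) : (q : ℝ) / 2 ≤ ((q / 2 + 1 : ℕ) : ℝ) := by
  have : q ≤ 2 * (q / 2 + 1) := by omega
  have : (q : ℝ) ≤ 2 * ((q / 2 + 1 : ℕ) : ℝ) := by exact_mod_cast this
  linarith

lemma div_le_two (q Y : ℕ) (hq : 1 ≤ q) : ((Y / (q / 2 + 1) : ℕ) : ℝ) ≤ 2 * Y / q := by
  have hq0 : (0 : ℝ) < q := by exact_mod_cast hq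
  refine Nat.cast_div_le.trans ?_
  have h := half_le q
  rw [div_le_div_iff₀ (by positivity) hq0]
  nlinarith [(Nat.cast_nonneg Y : (0:ℝ) ≤ Y)]

lemma sumB {α : ℝ} {a : ℤ} {q : ℕ} (hq : 1 ≤ q) (hg : Int.gcd a q = 1)
    (hα : |α - (a : ℝ) / (q : ℝ)| ≤ 1 / (q : ℝ) ^ 2) (β : ℝ) (F : ℕ → ℝ) (X : ℝ) (hX : 0 ≤ X)
    (h0 : ∀ k, 0 ≤ F k) (h1 : ∀ k, F k ≤ X)
    (h2 : ∀ k : ℕ, F k * |(α * k + β) - round (α * k + β)| ≤ 1) (Y : ℕ) :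
    ∑ k ∈ range Y, F k ≤ (2 * Y / q + 1) * (2 * X + 4 * q * (1 + Real.log (2 * q))) := by
  set D := 2 * X + 4 * q * (1 + Real.log (2 * q)) with hD
  have hD0 : 0 ≤ D := by
    have : 0 ≤ Real.log (2 * q) := by
      have := Real.log_natCast_nonneg (2 * q); push_cast at this; exact this
    positivity
  have key : ∀ n : ℕ, ∑ k ∈ range (n * (q / 2 + 1)), F k ≤ n * D := by
    intro n
    induction n with
    | zero => simp
    | succ n ih =>
      have hb := block hq hg hα β F X hX (n * (q / 2 + 1)) (fun k _ => h1 k) (fun k _ => h2 k)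
      rw [Nat.succ_mul, ← sum_range_add_sum_Ico _ (Nat.le_add_right _ _)]
      push_cast
      linarith
  have hY : Y ≤ (Y / (q / 2 + 1) + 1) * (q / 2 + 1) := by
    have := Nat.lt_div_mul_add (a := Y) (b := q / 2 + 1) (by omega)
    nlinarith
  calc ∑ k ∈ range Y, F k ≤ ∑ k ∈ range ((Y / (q / 2 + 1) + 1) * (q / 2 + 1)), F k :=
        sum_le_sum_of_subset_of_nonneg (range_mono hY) (fun k _ _ => h0 k)
    _ ≤ _ := key _
    _ ≤ _ := by
      push_cast
      have := div_le_two q Y hq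
      gcongr

lemma sumA {α : ℝ} {a : ℤ} {q : ℕ} (hq : 1 ≤ q) (hg : Int.gcd a q = 1)
    (hα : |α - (a : ℝ) / (q : ℝ)| ≤ 1 / (q : ℝ) ^ 2) (F : ℕ → ℝ) (N : ℝ) (hN : 0 ≤ N)
    (hF0 : F 0 = 0) (h0 : ∀ k, 0 ≤ F k) (h1 : ∀ k, F k * k ≤ N)
    (h2 : ∀ k : ℕ, F k * |(α * k) - round (α * k)| ≤ 1) (K : ℕ) :
    ∑ k ∈ Ioc 0 K, F k ≤ 4 * q + (2 * K / q + 1) * (4 * q * (1 + Real.log (2 * q)))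
      + 4 * N / q * (1 + Real.log K) := by
  have hq0 : (0 : ℝ) < q := by exact_mod_cast hq
  set D := 4 * q * (1 + Real.log (2 * q)) with hD
  have hD0 : 0 ≤ D := by
    have : 0 ≤ Real.log (2 * q) := by
      have := Real.log_natCast_nonneg (2 * q); push_cast at this; exact this
    positivity
  have hL := half_le q
  have h2' : ∀ k : ℕ, F k * |(α * k + 0) - round (α * k + 0)| ≤ 1 := by simpa using h2
  have key : ∀ n : ℕ, ∑ k ∈ range ((n + 1) * (q / 2 + 1)), F k
      ≤ 4 * q + (n + 1) * D + 4 * N / q * ∑ i ∈ Ioc 0 n, (1 : ℝ) / i := by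
    intro n
    induction n with
    | zero =>
      have hb := block hq hg hα 0 F (2 * q) (by positivity) 0 (by
        intro k hk
        simp only [mem_Ico] at hk
        rcases Nat.eq_zero_or_pos k with rfl | hk0
        · rw [hF0]; positivity
        · have hs := spacing hq hg hα k hk0 (by omega) (round (α * k))
          have h3 := mul_le_mul_of_nonneg_left hs (h0 k)
          have h4 := h2 k
          have h5 : F k * (1 / (2 * q)) ≤ 1 := h3.trans h4
          rw [mul_one_div, div_le_one (by positivity)] at h5
          exact h5) (fun k _ => h2' k)
      rw [range_eq_Ico]
      simp only [zero_add, one_mul, Nat.cast_zero] at hb ⊢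
      rw [Ioc_self, sum_empty]
      linarith
    | succ n ih =>
      have hb := block hq hg hα 0 F (2 * N / (q * (n + 1))) (by positivity)
        ((n + 1) * (q / 2 + 1)) (by
          intro k hk
          simp only [mem_Ico] at hk
          have h3 : ((n : ℝ) + 1) * (q / 2) ≤ k := by
            have : (((n + 1) * (q / 2 + 1) : ℕ) : ℝ) ≤ k := by exact_mod_cast hk.1
            rw [Nat.cast_mul] at this
            refine le_trans ?_ this
            rw [Nat.cast_add_one]
            gcongr
          rw [le_div_iff₀ (by positivity)]
          have h4 := h1 k
          have h5 := mul_le_mul_of_nonneg_left h3 (h0 k)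
          nlinarith) (fun k _ => h2' k)
      rw [Nat.succ_mul, ← sum_range_add_sum_Ico _ (Nat.le_add_right _ _)]
      have e : Ioc 0 (n + 1) = insert (n + 1) (Ioc 0 n) := by
        ext; simp; omega
      rw [e, sum_insert (by simp)]
      push_cast
      have e2 : 2 * (2 * N / (q * (n + 1))) = 4 * N / q * (1 / ((n : ℝ) + 1)) := by
        field_simp; ring
      rw [e2] at hb
      rw [mul_add (4 * N / q)]
      linarith
  have hK : Ioc 0 K ⊆ range ((K / (q / 2 + 1) + 1) * (q / 2 + 1)) := by
    intro i hi
    simp only [mem_Ioc, mem_range] at hi ⊢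
    have := Nat.lt_div_mul_add (a := K) (b := q / 2 + 1) (by omega)
    nlinarith
  calc ∑ k ∈ Ioc 0 K, F k ≤ ∑ k ∈ range ((K / (q / 2 + 1) + 1) * (q / 2 + 1)), F k :=
        sum_le_sum_of_subset_of_nonneg hK (fun k _ _ => h0 k)
    _ ≤ _ := key _
    _ ≤ _ := by
      have h3 := div_le_two q K hq
      have h4 : ∑ i ∈ Ioc 0 (K / (q / 2 + 1)), (1 : ℝ) / i ≤ 1 + Real.log K := by
        refine le_trans ?_ (harmonic_bound K)
        refine sum_le_sum_of_subset_of_nonneg ?_ (fun i _ _ => by positivity)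
        exact Ioc_subset_Ioc_right (Nat.div_le_self _ _)
      gcongr

/-- double sum rearrangement -/
lemma sum_antidiag {R : Type*} [AddCommMonoid R] (h : ℕ → ℕ → R) (M : ℕ) :
    ∑ n ∈ Ioc 0 M, ∑ x ∈ n.divisorsAntidiagonal, h x.1 x.2
      = ∑ u ∈ Ioc 0 M, ∑ m ∈ Ioc 0 (M / u), h u m := by
  have e1 : ∀ n ∈ Ioc 0 M, ∑ x ∈ n.divisorsAntidiagonal, h x.1 x.2
      = ∑ x ∈ Ioc 0 M ×ˢ Ioc 0 M, if x.1 * x.2 = n then h x.1 x.2 else 0 := by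
    intro n hn
    simp only [mem_Ioc] at hn
    rw [Nat.divisorsAntidiagonal_eq_prod_filter_of_le hn.1.ne' hn.2, ← sum_filter]
  rw [sum_congr rfl e1, sum_comm, sum_product]
  refine sum_congr rfl fun u hu => ?_
  simp only [mem_Ioc] at hu
  have hsub : Ioc 0 (M / u) ⊆ Ioc 0 M := Ioc_subset_Ioc_right (Nat.div_le_self _ _)
  rw [← sum_subset hsub]
  · refine sum_congr rfl fun m hm => ?_
    simp only [mem_Ioc] at hm
    rw [sum_ite_eq, if_pos]
    rw [mem_Ioc]
    refine ⟨Nat.mul_pos hu.1 hm.1, ?_⟩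
    rw [mul_comm]; exact (Nat.le_div_iff_mul_le hu.1).1 hm.2
  · intro m hm hm2
    rw [sum_ite_eq, if_neg]
    simp only [mem_Ioc] at hm hm2 ⊢
    rintro ⟨_, h⟩
    apply hm2
    refine ⟨hm.1, (Nat.le_div_iff_mul_le hu.1).2 ?_⟩
    rw [mul_comm]; exact h

lemma sum_mul_rearrange (f g : ArithmeticFunction ℝ) (E : ℕ → ℂ) (M : ℕ) :
    ∑ n ∈ Ioc 0 M, (((f * g) n : ℝ) : ℂ) * E n
      = ∑ u ∈ Ioc 0 M, (f u : ℂ) * ∑ m ∈ Ioc 0 (M / u), (g m : ℂ) * E (u * m) := by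
  simp_rw [mul_sum]
  rw [← sum_antidiag (fun u m => (f u : ℂ) * ((g m : ℂ) * E (u * m)))]
  refine sum_congr rfl fun n _ => ?_
  rw [ArithmeticFunction.mul_apply]
  push_cast
  rw [sum_mul]
  refine sum_congr rfl fun x hx => ?_
  rw [(Nat.mem_divisorsAntidiagonal.1 hx).1]; ring

lemma log_mono_nat {m n : ℕ} (h : m ≤ n) : Real.log m ≤ Real.log n := by
  rcases Nat.eq_zero_or_pos m with rfl | hm
  · simpa using Real.log_natCast_nonneg n
  · exact Real.log_le_log (by exact_mod_cast hm) (by exact_mod_cast h)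

lemma card_divisors_eq (n : ℕ) : (#n.divisors : ℝ) = ∑ _x ∈ n.divisorsAntidiagonal, (1 : ℝ) := by
  rw [sum_const, nsmul_eq_mul, mul_one]
  congr 1
  rw [← Nat.map_div_right_divisors, card_map]

lemma sum_card_divisors (Z Y : ℕ) (h : Z ≤ Y) :
    ∑ n ∈ Ioc 0 Z, (#n.divisors : ℝ) ≤ Z * (1 + Real.log Y) := by
  simp_rw [card_divisors_eq]
  rw [sum_antidiag (fun _ _ => (1 : ℝ))]
  calc _ ≤ ∑ u ∈ Ioc 0 Z, (Z : ℝ) * (1 / u) := by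
        refine sum_le_sum fun u _ => ?_
        simp only [sum_const, Nat.card_Ioc, tsub_zero, nsmul_eq_mul, mul_one]
        rw [mul_one_div]
        exact Nat.cast_div_le
    _ ≤ _ := by
        rw [← mul_sum]
        have := harmonic_bound Z
        have := log_mono_nat h
        gcongr
        linarith

lemma sum_card_divisors_div (Y : ℕ) :
    ∑ n ∈ Ioc 0 Y, (#n.divisors : ℝ) * (1 / n) ≤ (1 + Real.log Y) ^ 2 := by
  have e : ∀ n ∈ Ioc 0 Y, (#n.divisors : ℝ) * (1 / n)
      = ∑ x ∈ n.divisorsAntidiagonal, (1 : ℝ) / x.1 * (1 / x.2) := by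
    intro n _
    rw [card_divisors_eq, sum_mul]
    refine sum_congr rfl fun x hx => ?_
    rw [← (Nat.mem_divisorsAntidiagonal.1 hx).1]
    push_cast
    rw [one_mul, one_div_mul_one_div]
  rw [sum_congr rfl e, sum_antidiag (fun u m => (1 : ℝ) / u * (1 / m))]
  have hl := Real.log_natCast_nonneg Y
  calc _ ≤ ∑ u ∈ Ioc 0 Y, (1 : ℝ) / u * (1 + Real.log Y) := by
        refine sum_le_sum fun u _ => ?_
        rw [← mul_sum]
        have h1 := harmonic_bound (Y / u)
        have h2 := log_mono_nat (Nat.div_le_self Y u)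
        gcongr
        linarith
    _ ≤ _ := by
        rw [← sum_mul, sq]
        have := harmonic_bound Y
        gcongr

lemma card_divisors_mul_le (m n : ℕ) : (#(m * n).divisors : ℝ) ≤ #m.divisors * #n.divisors := by
  rw [Nat.divisors_mul]
  exact_mod_cast card_mul_le

lemma sum_card_divisors_sq (Y : ℕ) :
    ∑ n ∈ Ioc 0 Y, (#n.divisors : ℝ) ^ 2 ≤ Y * (1 + Real.log Y) ^ 3 := by
  have e : ∀ n ∈ Ioc 0 Y, (#n.divisors : ℝ) ^ 2
      = ∑ x ∈ n.divisorsAntidiagonal, (#(x.1 * x.2).divisors : ℝ) := by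
    intro n _
    rw [sq]
    nth_rewrite 1 [card_divisors_eq]
    rw [sum_mul]
    refine sum_congr rfl fun x hx => ?_
    rw [(Nat.mem_divisorsAntidiagonal.1 hx).1, one_mul]
  rw [sum_congr rfl e, sum_antidiag (fun u m => (#(u * m).divisors : ℝ))]
  have hl := Real.log_natCast_nonneg Y
  calc _ ≤ ∑ u ∈ Ioc 0 Y, (Y * (1 + Real.log Y)) * ((#u.divisors : ℝ) * (1 / u)) := by
        refine sum_le_sum fun u _ => ?_
        calc _ ≤ ∑ m ∈ Ioc 0 (Y / u), (#u.divisors : ℝ) * #m.divisors :=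
              sum_le_sum fun m _ => card_divisors_mul_le u m
          _ = #u.divisors * ∑ m ∈ Ioc 0 (Y / u), (#m.divisors : ℝ) := by rw [mul_sum]
          _ ≤ #u.divisors * (((Y / u : ℕ) : ℝ) * (1 + Real.log Y)) := by
              gcongr; exact sum_card_divisors _ _ (Nat.div_le_self _ _)
          _ ≤ #u.divisors * (((Y : ℝ) / u) * (1 + Real.log Y)) := by
              gcongr; exact Nat.cast_div_le
          _ = _ := by ring
    _ ≤ _ := by
        rw [← mul_sum]
        have := sum_card_divisors_div Y
        calc _ ≤ Y * (1 + Real.log Y) * (1 + Real.log Y) ^ 2 := by gcongr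
          _ = _ := by ring

end MinorArc

namespace MinorArc
open Finset

lemma bilinear_symm (s : Finset ℕ) (g : ℕ → ℝ) (F : ℕ → ℕ → ℝ) (R : ℝ)
    (hF0 : ∀ m n, 0 ≤ F m n) (hsymm : ∀ m n, F m n = F n m)
    (hR : ∀ m ∈ s, ∑ n ∈ s, F m n ≤ R) :
    ∑ m ∈ s, ∑ n ∈ s, |g m| * |g n| * F m n ≤ (∑ m ∈ s, g m ^ 2) * R := by
  have h1 : ∑ m ∈ s, ∑ n ∈ s, |g m| * |g n| * F m n
      ≤ ∑ m ∈ s, ∑ n ∈ s, (g m ^ 2 / 2 * F m n + g n ^ 2 / 2 * F n m) := by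
    refine sum_le_sum fun m _ => sum_le_sum fun n _ => ?_
    rw [hsymm n m, ← add_mul]
    refine mul_le_mul_of_nonneg_right ?_ (hF0 m n)
    rw [← sq_abs (g m), ← sq_abs (g n)]
    nlinarith [sq_nonneg (|g m| - |g n|)]
  refine h1.trans ?_
  simp_rw [sum_add_distrib]
  rw [sum_comm (f := fun m n => g n ^ 2 / 2 * F n m), ← two_mul]
  simp_rw [← mul_sum]
  rw [mul_sum, sum_mul]
  refine sum_le_sum fun m hm => ?_
  have := mul_le_mul_of_nonneg_left (hR m hm) (sq_nonneg (g m))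
  linarith

lemma piece {α : ℝ} {a : ℤ} {q : ℕ} (hq : 1 ≤ q) (hg : Int.gcd a q = 1)
    (hα : |α - (a : ℝ) / (q : ℝ)| ≤ 1 / (q : ℝ) ^ 2) (f g : ℕ → ℝ) (l : ℝ)
    (hf : ∀ u, |f u| ≤ l) (hgd : ∀ n, |g n| ≤ #n.divisors) (X M : ℕ) (hX : 1 ≤ X) :
    ‖∑ u ∈ Ico X (2 * X), (f u : ℂ) * ∑ n ∈ Ioc 0 (M / u), (g n : ℂ) * eexp (α * (u * n : ℕ))‖ ^ 2
      ≤ (X * l ^ 2) * (((M / X : ℕ) * (1 + Real.log (M / X : ℕ)) ^ 3) *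
        ((2 * ((M / X : ℕ) + 1) / q + 1) * (2 * X + 4 * q * (1 + Real.log (2 * q))))) := by
  set Y := M / X with hY
  set I : ℕ → ℂ := fun u => ∑ n ∈ Ioc 0 (M / u), (g n : ℂ) * eexp (α * (u * n : ℕ)) with hI
  set F : ℕ → ℕ → ℝ := fun m n =>
    ‖∑ u ∈ (Ico X (2 * X)).filter (fun u => u * m ≤ M ∧ u * n ≤ M),
      eexp ((α * n + -(α * m)) * u)‖ with hF
  set R := ((2 * ((Y : ℝ) + 1) / q + 1) * (2 * X + 4 * q * (1 + Real.log (2 * q)))) with hR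
  have hR0 : 0 ≤ R := by
    have : 0 ≤ Real.log (2 * q) := by
      have := Real.log_natCast_nonneg (2 * q); push_cast at this; exact this
    positivity
  -- Cauchy-Schwarz
  have h1 : ‖∑ u ∈ Ico X (2 * X), (f u : ℂ) * I u‖ ^ 2
      ≤ (∑ u ∈ Ico X (2 * X), |f u| ^ 2) * ∑ u ∈ Ico X (2 * X), ‖I u‖ ^ 2 := by
    refine le_trans ?_ (sum_mul_sq_le_sq_mul_sq _ _ _)
    gcongr
    refine (norm_sum_le _ _).trans (le_of_eq ?_)
    refine sum_congr rfl fun u _ => ?_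
    rw [norm_mul, Complex.norm_real, Real.norm_eq_abs]
  have h2 : ∑ u ∈ Ico X (2 * X), |f u| ^ 2 ≤ X * l ^ 2 := by
    calc _ ≤ ∑ u ∈ Ico X (2 * X), l ^ 2 := by
          refine sum_le_sum fun u _ => ?_
          have := hf u
          gcongr
      _ = _ := by
          rw [sum_const, Nat.card_Ico, nsmul_eq_mul]
          congr 2; omega
  have hIeq : ∀ u ∈ Ico X (2 * X), I u
      = ∑ n ∈ Ioc 0 Y, if u * n ≤ M then (g n : ℂ) * eexp (α * (u * n : ℕ)) else 0 := by
    intro u hu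
    rw [mem_Ico] at hu
    rw [← sum_filter]
    refine sum_congr ?_ fun _ _ => rfl
    ext n
    simp only [mem_Ioc, mem_filter]
    rw [Nat.le_div_iff_mul_le (by omega), hY, Nat.le_div_iff_mul_le (by omega)]
    constructor
    · rintro ⟨h, h'⟩
      refine ⟨⟨h, ?_⟩, by rw [mul_comm]; exact h'⟩
      exact (Nat.mul_le_mul_left n hu.1).trans h'
    · rintro ⟨⟨h, _⟩, h'⟩
      exact ⟨h, by rw [mul_comm]; exact h'⟩
  have h3 : ((∑ u ∈ Ico X (2 * X), ‖I u‖ ^ 2 : ℝ) : ℂ)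
      = ∑ m ∈ Ioc 0 Y, ∑ n ∈ Ioc 0 Y, ((g m : ℂ) * (g n : ℂ)) *
        ∑ u ∈ (Ico X (2 * X)).filter (fun u => u * m ≤ M ∧ u * n ≤ M),
          eexp ((α * n + -(α * m)) * u) := by
    push_cast
    have e1 : ∀ u ∈ Ico X (2 * X), ((‖I u‖ : ℂ)) ^ 2
        = ∑ m ∈ Ioc 0 Y, ∑ n ∈ Ioc 0 Y, ((g m : ℂ) * (g n : ℂ)) *
          (if u * m ≤ M ∧ u * n ≤ M then eexp ((α * n + -(α * m)) * u) else 0) := by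
      intro u hu
      rw [← Complex.conj_mul', hIeq u hu, map_sum, sum_mul_sum]
      refine sum_congr rfl fun m _ => sum_congr rfl fun n _ => ?_
      by_cases hm : u * m ≤ M
      · by_cases hn : u * n ≤ M
        · rw [if_pos hm, if_pos hn, if_pos ⟨hm, hn⟩, map_mul, Complex.conj_ofReal, conj_eexp]
          have : eexp ((α * n + -(α * m)) * u)
              = eexp (-(α * (u * m : ℕ))) * eexp (α * (u * n : ℕ)) := by
            rw [← eexp_add]; congr 1; push_cast; ring
          rw [this]; ring
        · simp [hn]
      · simp [hm]
    rw [sum_congr rfl e1, sum_comm]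
    refine sum_congr rfl fun m _ => ?_
    rw [sum_comm]
    refine sum_congr rfl fun n _ => ?_
    rw [← mul_sum, sum_filter]
  have h4 : ∑ u ∈ Ico X (2 * X), ‖I u‖ ^ 2
      ≤ ∑ m ∈ Ioc 0 Y, ∑ n ∈ Ioc 0 Y, |g m| * |g n| * F m n := by
    have e0 : (0 : ℝ) ≤ ∑ u ∈ Ico X (2 * X), ‖I u‖ ^ 2 := by positivity
    rw [← Real.norm_of_nonneg e0, ← Complex.norm_real, h3]
    refine (norm_sum_le _ _).trans (sum_le_sum fun m _ => ?_)
    refine (norm_sum_le _ _).trans (sum_le_sum fun n _ => ?_)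
    rw [norm_mul, norm_mul, Complex.norm_real, Complex.norm_real, Real.norm_eq_abs,
      Real.norm_eq_abs]
  have hsymm : ∀ m n, F m n = F n m := by
    intro m n
    simp only [hF]
    rw [← Complex.norm_conj, map_sum]
    congr 1
    refine sum_congr ?_ fun u _ => ?_
    · ext u; simp only [mem_filter]; tauto
    · rw [conj_eexp]; congr 1; ring
  have hrow : ∀ m ∈ Ioc 0 Y, ∑ n ∈ Ioc 0 Y, F m n ≤ R := by
    intro m hm
    rw [mem_Ioc] at hm
    have hb := sumB hq hg hα (-(α * m)) (F m) X (by positivity) (fun n => norm_nonneg _)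
      (fun n => by
        refine (geom_trivial _ _).trans ?_
        have := card_filter_le (Ico X (2 * X)) (fun u => u * m ≤ M ∧ u * n ≤ M)
        rw [Nat.card_Ico] at this
        have h' : 2 * X - X = X := by omega
        rw [h'] at this
        exact_mod_cast this)
      (fun n => by
        have e : (Ico X (2 * X)).filter (fun u => u * m ≤ M ∧ u * n ≤ M)
            = Ico X (min (2 * X) (M / max m n + 1)) := by
          ext u
          simp only [mem_filter, mem_Ico, lt_min_iff]
          rw [Nat.lt_succ_iff, Nat.le_div_iff_mul_le (by have := le_max_left m n; omega)]
          have : u * max m n ≤ M ↔ u * m ≤ M ∧ u * n ≤ M := by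
            rcases le_total m n with h | h
            · rw [max_eq_right h]
              exact ⟨fun h' => ⟨(Nat.mul_le_mul_left u h).trans h', h'⟩, fun h' => h'.2⟩
            · rw [max_eq_left h]
              exact ⟨fun h' => ⟨h', (Nat.mul_le_mul_left u h).trans h'⟩, fun h' => h'.1⟩
          rw [this]
          tauto
        simp only [hF]
        rw [e]
        exact geom_bound _ _ _) (Y + 1)
    refine le_trans ?_ (hb.trans (le_of_eq ?_))
    · refine sum_le_sum_of_subset_of_nonneg ?_ (fun n _ _ => norm_nonneg _)
      intro n hn; simp at hn ⊢; omega
    · rw [hR]; push_cast; rfl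
  have h5 := bilinear_symm (Ioc 0 Y) g F R (fun _ _ => norm_nonneg _) hsymm hrow
  have h6 : ∑ m ∈ Ioc 0 Y, g m ^ 2 ≤ Y * (1 + Real.log Y) ^ 3 := by
    refine le_trans (sum_le_sum fun m _ => ?_) (sum_card_divisors_sq Y)
    rw [← sq_abs]
    have := hgd m
    gcongr
  calc _ ≤ _ := h1
    _ ≤ (X * l ^ 2) * ((Y * (1 + Real.log Y) ^ 3) * R) := by
      have h7 := mul_le_mul_of_nonneg_right h6 hR0
      gcongr
      exact h4.trans (h5.trans h7)

lemma log_consts {N q : ℕ} (hN : 2 ≤ N) (hq : 1 ≤ q) (hqN : q ≤ N) :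
    1 / 2 ≤ Real.log N ∧ 1 + Real.log N ≤ 3 * Real.log N ∧
      1 + Real.log (2 * q) ≤ 4 * Real.log N := by
  have h2 := Real.log_two_gt_d9
  have h3 := log_mono_nat hN
  have h4 := log_mono_nat hqN
  have hq0 : (q : ℝ) ≠ 0 := by positivity
  push_cast at h3
  rw [Real.log_mul (by norm_num) hq0]
  refine ⟨by linarith, by linarith, by linarith⟩

lemma piece2 {α : ℝ} {a : ℤ} {q : ℕ} (hq : 1 ≤ q) (hg : Int.gcd a q = 1)
    (hα : |α - (a : ℝ) / (q : ℝ)| ≤ 1 / (q : ℝ) ^ 2) (f g : ℕ → ℝ) (N U : ℕ) (x b : ℝ)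
    (hN : 2 ≤ N) (hqN : q ≤ N) (hx : 0 < x) (hxU : x ^ 2 ≤ U + 1)
    (hb0 : 0 ≤ b) (hb : 1 / q + 1 / x ^ 2 + q / N ≤ b ^ 2)
    (hf : ∀ u, |f u| ≤ Real.log N) (hgd : ∀ n, |g n| ≤ #n.divisors)
    (hfU : ∀ u ≤ U, f u = 0) (hgU : ∀ u ≤ U, g u = 0)
    (X M : ℕ) (hX : 1 ≤ X) (hMN : M ≤ N) :
    ‖∑ u ∈ Ico X (2 * X), (f u : ℂ) * ∑ n ∈ Ioc 0 (M / u), (g n : ℂ) * eexp (α * (u * n : ℕ))‖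
      ≤ 60 * N * Real.log N ^ 3 * b := by
  obtain ⟨hl1, hl2, hl3⟩ := log_consts hN hq hqN
  set l := Real.log N with hl
  have hN0 : (0 : ℝ) < N := by positivity
  have hq0 : (0 : ℝ) < q := by positivity
  have hX0 : (0 : ℝ) < X := by positivity
  have hl0 : 0 < l := by linarith
  rcases Nat.lt_or_ge U (M / X) with hYU | hYU
  swap
  · rw [sum_eq_zero, norm_zero]
    · positivity
    · intro u hu
      rw [mem_Ico] at hu
      rw [sum_eq_zero, mul_zero]
      intro n hn
      rw [mem_Ioc] at hn
      rw [hgU n, Complex.ofReal_zero, zero_mul]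
      exact hn.2.trans ((Nat.div_le_div_left hu.1 (by omega)).trans hYU)
  rcases Nat.lt_or_ge U (2 * X - 1) with hXU | hXU
  swap
  · rw [sum_eq_zero, norm_zero]
    · positivity
    · intro u hu
      rw [mem_Ico] at hu
      rw [hfU u (by omega), Complex.ofReal_zero, zero_mul]
  have hp := piece hq hg hα f g l hf hgd X M hX
  set Y := M / X with hY
  have hY1 : 1 ≤ Y := by omega
  have hXY : (X : ℝ) * Y ≤ N := by
    have : X * Y ≤ M := Nat.mul_div_le M X
    exact_mod_cast this.trans hMN
  have hYl : 1 + Real.log Y ≤ 3 * l := by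
    have h1 : Y ≤ N := (Nat.div_le_self M X).trans hMN
    have := log_mono_nat h1
    linarith
  have hYl0 : 0 ≤ 1 + Real.log Y := by have := Real.log_natCast_nonneg Y; linarith
  have hY1' : (1 : ℝ) ≤ Y := by exact_mod_cast hY1
  have hxX : x ^ 2 ≤ 2 * X := by
    have : (U : ℝ) + 1 ≤ 2 * X := by
      have : U + 1 ≤ 2 * X := by omega
      exact_mod_cast this
    linarith
  have hxY : x ^ 2 ≤ Y := by
    have : (U : ℝ) + 1 ≤ Y := by exact_mod_cast hYU
    linarith
  have hx2 : 0 < x ^ 2 := by positivity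
  have hYle : (Y : ℝ) ≤ 2 * (N / x ^ 2) := by
    rw [← mul_div_assoc, le_div_iff₀ hx2]
    nlinarith [mul_le_mul_of_nonneg_left hxX (by linarith : (0:ℝ) ≤ Y)]
  have hXle : (X : ℝ) ≤ N / x ^ 2 := by
    rw [le_div_iff₀ hx2]
    nlinarith [mul_le_mul_of_nonneg_left hxY hX0.le]
  have hA : (2 * ((Y : ℝ) + 1) / q + 1) * (2 * X + 4 * q * (1 + Real.log (2 * q)))
      ≤ l * (132 * (N * b ^ 2)) := by
    have s1 : 2 * ((Y : ℝ) + 1) / q ≤ 4 * Y / q := by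
      apply div_le_div_of_nonneg_right _ hq0.le; linarith
    have s2 : 2 * (X : ℝ) + 4 * q * (1 + Real.log (2 * q)) ≤ 2 * X + 16 * q * l := by
      nlinarith [mul_le_mul_of_nonneg_left hl3 hq0.le]
    have s3 : (2 * ((Y : ℝ) + 1) / q + 1) * (2 * X + 4 * q * (1 + Real.log (2 * q)))
        ≤ (4 * Y / q + 1) * (2 * X + 16 * q * l) := by
      have : 0 ≤ Real.log (2 * q) := by
        have := Real.log_natCast_nonneg (2 * q); push_cast at this; exact this
      gcongr
    have s4 : (4 * (Y : ℝ) / q + 1) * (2 * X + 16 * q * l)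
        = 8 * (X * Y / q) + 64 * Y * l + 2 * X + 16 * q * l := by
      field_simp; ring
    have s5 : (X : ℝ) * Y / q ≤ N / q := by gcongr
    have s6 : N * b ^ 2 ≥ N / q + N / x ^ 2 + q := by
      have := mul_le_mul_of_nonneg_left hb hN0.le
      have e : (N : ℝ) * (1 / q + 1 / x ^ 2 + q / N) = N / q + N / x ^ 2 + q := by
        field_simp
      linarith
    have s7 : (0 : ℝ) ≤ N / q := by positivity
    have s8 : (0 : ℝ) ≤ N / x ^ 2 := by positivity
    rw [s4] at s3
    refine s3.trans ?_
    have hl' : 0 ≤ 2 * l - 1 := by linarith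
    generalize (N : ℝ) / q = A at *
    generalize (N : ℝ) / x ^ 2 = B at *
    generalize (N : ℝ) * b ^ 2 = D at *
    have t1 : A ≤ 2 * (l * A) := by linarith [mul_nonneg hl' s7]
    have t2 : Y * l ≤ 2 * (l * B) := by linarith [mul_le_mul_of_nonneg_left hYle hl0.le]
    have t3 : B ≤ 2 * (l * B) := by linarith [mul_nonneg hl' s8]
    have t4 : l * (A + B + q) ≤ l * D := mul_le_mul_of_nonneg_left s6 hl0.le
    have t5 := mul_nonneg hl0.le s7
    have t6 := mul_nonneg hl0.le hq0.le
    linarith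
  have hA0 : 0 ≤ l * (132 * (N * b ^ 2)) := by positivity
  have hfin : ‖∑ u ∈ Ico X (2 * X), (f u : ℂ) * ∑ n ∈ Ioc 0 (M / u),
      (g n : ℂ) * eexp (α * (u * n : ℕ))‖ ^ 2 ≤ (60 * N * l ^ 3 * b) ^ 2 := by
    refine hp.trans ?_
    have hlq : 0 ≤ Real.log (2 * q) := by
      have := Real.log_natCast_nonneg (2 * q); push_cast at this; exact this
    calc _ ≤ (X * l ^ 2) * ((Y * (3 * l) ^ 3) * (l * (132 * (N * b ^ 2)))) := by gcongr
      _ = (X * Y) * (27 * l ^ 6 * (132 * (N * b ^ 2))) := by ring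
      _ ≤ N * (27 * l ^ 6 * (132 * (N * b ^ 2))) := by gcongr
      _ = 3564 * (N * l ^ 3 * b) ^ 2 := by ring
      _ ≤ 3600 * (N * l ^ 3 * b) ^ 2 := by gcongr; norm_num
      _ = _ := by ring
  exact (sq_le_sq₀ (norm_nonneg _) (by positivity)).1 hfin

end MinorArc

namespace MinorArc
open Finset

lemma dyadic (h : ℕ → ℂ) (n : ℕ) :
    ∑ u ∈ Ico 1 (2 ^ n), h u = ∑ i ∈ range n, ∑ u ∈ Ico (2 ^ i) (2 * 2 ^ i), h u := by
  induction n with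
  | zero => simp
  | succ n ih =>
    rw [sum_range_succ, ← ih, pow_succ, mul_comm (2 ^ n) 2,
      sum_Ico_consecutive _ Nat.one_le_two_pow (by have := Nat.one_le_two_pow (n := n); omega)]

lemma log_count {N : ℕ} (hN : 2 ≤ N) : ((Nat.log 2 N + 1 : ℕ) : ℝ) ≤ 3 * Real.log N := by
  have h1 : 2 ^ Nat.log 2 N ≤ N := Nat.pow_log_le_self 2 (by omega)
  have h2 := log_mono_nat h1
  push_cast at h2
  rw [Real.log_pow] at h2
  have h3 := Real.log_two_gt_d9
  have h4 := log_mono_nat hN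
  push_cast at h4 ⊢
  have h5 : (0 : ℝ) ≤ Nat.log 2 N := by positivity
  nlinarith

lemma typeII {α : ℝ} {a : ℤ} {q : ℕ} (hq : 1 ≤ q) (hg : Int.gcd a q = 1)
    (hα : |α - (a : ℝ) / (q : ℝ)| ≤ 1 / (q : ℝ) ^ 2) (f g : ℕ → ℝ) (N U : ℕ) (x b : ℝ)
    (hN : 2 ≤ N) (hqN : q ≤ N) (hx : 0 < x) (hxU : x ^ 2 ≤ U + 1)
    (hb0 : 0 ≤ b) (hb : 1 / q + 1 / x ^ 2 + q / N ≤ b ^ 2)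
    (hf : ∀ u ≤ N, |f u| ≤ Real.log N) (hgd : ∀ n, |g n| ≤ #n.divisors)
    (hfU : ∀ u ≤ U, f u = 0) (hgU : ∀ u ≤ U, g u = 0) (M : ℕ) (hMN : M ≤ N) :
    ‖∑ u ∈ Ioc 0 M, (f u : ℂ) * ∑ n ∈ Ioc 0 (M / u), (g n : ℂ) * eexp (α * (u * n : ℕ))‖
      ≤ 180 * N * Real.log N ^ 4 * b := by
  have hl0 : 0 ≤ Real.log N := Real.log_natCast_nonneg N
  set f' : ℕ → ℝ := fun u => if u ≤ N then f u else 0 with hf'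
  set h : ℕ → ℂ := fun u => (f' u : ℂ) * ∑ n ∈ Ioc 0 (M / u), (g n : ℂ) * eexp (α * (u * n : ℕ))
    with hh
  have e1 : ∑ u ∈ Ioc 0 M, (f u : ℂ) * ∑ n ∈ Ioc 0 (M / u), (g n : ℂ) * eexp (α * (u * n : ℕ))
      = ∑ u ∈ Ico 1 (2 ^ (Nat.log 2 N + 1)), h u := by
    have hlt : N < 2 ^ (Nat.log 2 N + 1) := Nat.lt_pow_succ_log_self (by norm_num) N
    have hsub : Ioc 0 M ⊆ Ico 1 (2 ^ (Nat.log 2 N + 1)) := by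
      intro u hu
      simp only [mem_Ioc, mem_Ico] at hu ⊢
      omega
    rw [← sum_subset hsub]
    · refine sum_congr rfl fun u hu => ?_
      rw [mem_Ioc] at hu
      simp only [hh, hf']
      rw [if_pos (by omega)]
    · intro u hu hu'
      simp only [mem_Ioc, mem_Ico] at hu hu'
      simp only [hh]
      rw [Nat.div_eq_of_lt (by omega), Ioc_self, sum_empty, mul_zero]
  rw [e1, dyadic]
  have hfb : ∀ u, |f' u| ≤ Real.log N := by
    intro u
    simp only [hf']
    split_ifs with h
    · exact hf u h
    · simpa using hl0
  have hfU' : ∀ u ≤ U, f' u = 0 := by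
    intro u hu
    simp only [hf']
    rw [hfU u hu, ite_self]
  calc _ ≤ ∑ i ∈ range (Nat.log 2 N + 1), ‖∑ u ∈ Ico (2 ^ i) (2 * 2 ^ i), h u‖ := norm_sum_le _ _
    _ ≤ ∑ i ∈ range (Nat.log 2 N + 1), 60 * N * Real.log N ^ 3 * b :=
        sum_le_sum fun i _ => piece2 hq hg hα f' g N U x b hN hqN hx hxU hb0 hb hfb hgd hfU' hgU
          (2 ^ i) M Nat.one_le_two_pow hMN
    _ = ((Nat.log 2 N + 1 : ℕ) : ℝ) * (60 * N * Real.log N ^ 3 * b) := by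
        rw [sum_const, card_range, nsmul_eq_mul]
    _ ≤ (3 * Real.log N) * (60 * N * Real.log N ^ 3 * b) := by
        gcongr; exact log_count hN
    _ = _ := by ring

lemma typeI {α : ℝ} {a : ℤ} {q : ℕ} (hq : 1 ≤ q) (hg : Int.gcd a q = 1)
    (hα : |α - (a : ℝ) / (q : ℝ)| ≤ 1 / (q : ℝ) ^ 2) (c g : ℕ → ℝ) (N K M : ℕ) (A C : ℝ)
    (hN : 2 ≤ N) (hqN : q ≤ N) (hMN : M ≤ N) (hKN : K ≤ N) (hA : 0 < A) (hC : 0 ≤ C)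
    (hc : ∀ k ∈ Ioc 0 M, |c k| ≤ C) (hcK : ∀ k, K < k → c k = 0)
    (hg1 : ∀ (θ : ℝ) (n : ℕ), n ≤ N → ‖∑ m ∈ Ioc 0 n, (g m : ℂ) * eexp (θ * m)‖ ≤ A * n)
    (hg2 : ∀ (θ : ℝ) (n : ℕ), n ≤ N →
      ‖∑ m ∈ Ioc 0 n, (g m : ℂ) * eexp (θ * m)‖ * |θ - round θ| ≤ A) :
    ‖∑ u ∈ Ioc 0 M, (c u : ℂ) * ∑ n ∈ Ioc 0 (M / u), (g n : ℂ) * eexp (α * (u * n : ℕ))‖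
      ≤ A * C * (32 * Real.log N * (q + K + N / q)) := by
  obtain ⟨hl1, hl2, hl3⟩ := log_consts hN hq hqN
  have hKl := log_mono_nat hKN
  set l := Real.log N with hl
  have hq0 : (0 : ℝ) < q := by positivity
  set G : ℕ → ℝ := fun k => ‖∑ m ∈ Ioc 0 (M / k), (g m : ℂ) * eexp ((α * k) * m)‖ with hG
  have hGn : ∀ k, M / k ≤ N := fun k => (Nat.div_le_self _ _).trans hMN
  have hS := sumA hq hg hα (fun k => G k / A) N (by positivity) (by simp [hG])
    (fun k => by positivity)
    (fun k => by
      have h1 := hg1 (α * k) (M / k) (hGn k)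
      have h2 : G k / A ≤ (M / k : ℕ) := by
        rw [div_le_iff₀ hA, mul_comm]; exact h1
      have h3 : (((M / k) * k : ℕ) : ℝ) ≤ N := by
        exact_mod_cast (Nat.div_mul_le_self M k).trans hMN
      push_cast at h3
      exact (mul_le_mul_of_nonneg_right h2 (by positivity)).trans h3)
    (fun k => by
      have h1 := hg2 (α * k) (M / k) (hGn k)
      rw [div_mul_eq_mul_div, div_le_one hA]
      exact h1) K
  have hS2 : ∑ k ∈ Ioc 0 K, G k / A ≤ 32 * l * (q + K + N / q) := by
    refine hS.trans ?_
    have hNq : (0 : ℝ) ≤ N / q := by positivity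
    have e1 : (2 * (K : ℝ) / q + 1) * (4 * q * (1 + Real.log (2 * q)))
        = (8 * K + 4 * q) * (1 + Real.log (2 * q)) := by field_simp; ring
    have e2 : (8 * (K : ℝ) + 4 * q) * (1 + Real.log (2 * q)) ≤ (8 * K + 4 * q) * (4 * l) := by
      gcongr
    have e3 : 4 * (N : ℝ) / q * (1 + Real.log K) ≤ 4 * (N / q) * (3 * l) := by
      rw [mul_div_assoc]
      gcongr; linarith
    rw [e1]
    have e4 : 0 ≤ (2 * l - 1) * q := mul_nonneg (by linarith) hq0.le
    have e5 : 0 ≤ l * (N / q) := mul_nonneg (by linarith) hNq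
    have e6 : 0 ≤ l * q := mul_nonneg (by linarith) hq0.le
    linarith
  have hinner : ∀ u : ℕ, ‖∑ n ∈ Ioc 0 (M / u), (g n : ℂ) * eexp (α * (u * n : ℕ))‖ = G u := by
    intro u
    simp only [hG]
    congr 1
    refine sum_congr rfl fun n _ => ?_
    congr 2; push_cast; ring
  calc _ ≤ ∑ u ∈ Ioc 0 M, |c u| * G u := by
        refine (norm_sum_le _ _).trans (le_of_eq (sum_congr rfl fun u _ => ?_))
        rw [norm_mul, hinner, Complex.norm_real, Real.norm_eq_abs]
    _ = ∑ u ∈ Ioc 0 M with u ≤ K, |c u| * G u := by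
        rw [sum_filter]
        refine sum_congr rfl fun u _ => ?_
        split_ifs with h
        · rfl
        · rw [hcK u (by omega), abs_zero, zero_mul]
    _ ≤ ∑ u ∈ Ioc 0 M with u ≤ K, C * G u := by
        refine sum_le_sum fun u hu => ?_
        rw [mem_filter] at hu
        exact mul_le_mul_of_nonneg_right (hc u hu.1) (norm_nonneg _)
    _ ≤ ∑ u ∈ Ioc 0 K, C * G u := by
        refine sum_le_sum_of_subset_of_nonneg ?_
          (fun u _ _ => mul_nonneg hC (norm_nonneg _))
        intro u hu
        simp only [mem_filter, mem_Ioc] at hu ⊢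
        omega
    _ = A * C * ∑ k ∈ Ioc 0 K, G k / A := by
        rw [mul_sum]
        refine sum_congr rfl fun u _ => ?_
        field_simp
    _ ≤ _ := by gcongr

lemma one_weight1 (θ : ℝ) (n : ℕ) : ‖∑ m ∈ Ioc 0 n, ((1 : ℝ) : ℂ) * eexp (θ * m)‖ ≤ 1 * n := by
  simp only [Complex.ofReal_one, one_mul]
  simpa using geom_trivial θ (Ioc 0 n)

lemma one_weight2 (θ : ℝ) (n : ℕ) :
    ‖∑ m ∈ Ioc 0 n, ((1 : ℝ) : ℂ) * eexp (θ * m)‖ * |θ - round θ| ≤ 1 := by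
  simp only [Complex.ofReal_one, one_mul]
  have : Ioc 0 n = Ico 1 (n + 1) := by ext; simp; omega
  rw [this]
  exact geom_bound θ _ _

lemma log_weight1 (θ : ℝ) (N n : ℕ) (h : n ≤ N) :
    ‖∑ m ∈ Ioc 0 n, (Real.log m : ℂ) * eexp (θ * m)‖ ≤ (2 * Real.log N) * n := by
  have hl0 : 0 ≤ Real.log N := Real.log_natCast_nonneg N
  calc _ ≤ ∑ m ∈ Ioc 0 n, ‖(Real.log m : ℂ) * eexp (θ * m)‖ := norm_sum_le _ _
    _ ≤ ∑ m ∈ Ioc 0 n, Real.log N := by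
        refine sum_le_sum fun m hm => ?_
        rw [mem_Ioc] at hm
        rw [norm_mul, norm_eexp, mul_one, Complex.norm_real, Real.norm_eq_abs,
          abs_of_nonneg (Real.log_natCast_nonneg m)]
        exact log_mono_nat (by omega)
    _ = n * Real.log N := by simp
    _ ≤ _ := by nlinarith [(Nat.cast_nonneg n : (0 : ℝ) ≤ n), mul_nonneg (Nat.cast_nonneg n : (0 : ℝ) ≤ n) hl0]

lemma log_weight2 (θ : ℝ) (N n : ℕ) (h : n ≤ N) :
    ‖∑ m ∈ Ioc 0 n, (Real.log m : ℂ) * eexp (θ * m)‖ * |θ - round θ| ≤ 2 * Real.log N := by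
  have hl0 : 0 ≤ Real.log N := Real.log_natCast_nonneg N
  rcases (abs_nonneg (θ - round θ)).eq_or_lt with h0 | h0
  · rw [← h0]; simpa using hl0
  set t := |θ - round θ|
  have hB : ∀ m, ‖∑ i ∈ range m, eexp (θ * i)‖ ≤ 1 / t := by
    intro m
    rw [le_div_iff₀ h0, range_eq_Ico]
    exact geom_bound θ 0 m
  have h1 := abel_antitone (fun i => Real.log n - Real.log i) (fun i => eexp (θ * i)) (1 / t) n
    (fun i _ => by have := log_mono_nat (Nat.le_succ i); linarith) (by simp)
    (fun m _ => hB m)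
  have e : ∑ m ∈ Ioc 0 n, (Real.log m : ℂ) * eexp (θ * m)
      = Real.log n * ∑ i ∈ range (n + 1), eexp (θ * i)
        - ∑ i ∈ range (n + 1), ((Real.log n - Real.log i : ℝ) : ℂ) * eexp (θ * i) := by
    rw [mul_sum, ← sum_sub_distrib]
    have hsub : Ioc 0 n ⊆ range (n + 1) := by intro i hi; simp at hi ⊢; omega
    rw [sum_subset hsub]
    · refine sum_congr rfl fun i _ => ?_
      push_cast; ring
    · intro i hi hi'
      have : i = 0 := by simp at hi hi'; omega
      subst this
      simp
  rw [← le_div_iff₀ h0, e]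
  refine (norm_sub_le _ _).trans ?_
  rw [norm_mul, Complex.norm_real, Real.norm_eq_abs,
    abs_of_nonneg (Real.log_natCast_nonneg n)]
  have h2 := mul_le_mul_of_nonneg_left (hB (n + 1)) (Real.log_natCast_nonneg n)
  have h3 := log_mono_nat h
  have h4 : (Real.log n) * (1 / t) ≤ Real.log N * (1 / t) := by gcongr
  simp only [Nat.cast_zero, Real.log_zero, sub_zero] at h1
  rw [mul_div_assoc, mul_comm 2]
  rw [mul_one_div] at h2 h4 h1
  rw [mul_one_div] at h4
  linarith

end MinorArc

namespace MinorArc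
open Finset

open ArithmeticFunction in
/-- truncation to `n ≤ U` -/
noncomputable def loT (f : ArithmeticFunction ℝ) (U : ℕ) : ArithmeticFunction ℝ :=
  ⟨fun n => if n ≤ U then f n else 0, by simp⟩

/-- truncation to `n > U` -/
noncomputable def hiT (f : ArithmeticFunction ℝ) (U : ℕ) : ArithmeticFunction ℝ :=
  ⟨fun n => if n ≤ U then 0 else f n, by simp⟩

lemma loT_apply (f : ArithmeticFunction ℝ) (U n : ℕ) : loT f U n = if n ≤ U then f n else 0 := rfl
lemma hiT_apply (f : ArithmeticFunction ℝ) (U n : ℕ) : hiT f U n = if n ≤ U then 0 else f n := rfl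

lemma lo_add_hi (f : ArithmeticFunction ℝ) (U : ℕ) : loT f U + hiT f U = f := by
  ext n
  rw [ArithmeticFunction.add_apply, loT_apply, hiT_apply]
  split_ifs <;> simp

/-- real Moebius function -/
noncomputable def muR : ArithmeticFunction ℝ := ((ArithmeticFunction.moebius : ArithmeticFunction ℤ) : ArithmeticFunction ℝ)
/-- real zeta function -/
noncomputable def zeR : ArithmeticFunction ℝ := ((ArithmeticFunction.zeta : ArithmeticFunction ℕ) : ArithmeticFunction ℝ)
/-- von Mangoldt -/
noncomputable abbrev La : ArithmeticFunction ℝ := ArithmeticFunction.vonMangoldt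

lemma muR_zeR : muR * zeR = 1 := ArithmeticFunction.coe_moebius_mul_coe_zeta

lemma La_zeR : La * zeR = ArithmeticFunction.log := ArithmeticFunction.vonMangoldt_mul_zeta

lemma zeR_apply {n : ℕ} (h : n ≠ 0) : zeR n = 1 := by
  simp [zeR, ArithmeticFunction.zeta_apply, h]

lemma abs_muR (n : ℕ) : |muR n| ≤ 1 := by
  have : |ArithmeticFunction.moebius n| ≤ 1 := ArithmeticFunction.abs_moebius_le_one
  simp only [muR, ArithmeticFunction.intCoe_apply]
  exact_mod_cast this

lemma vaughan (U : ℕ) : La = loT La U + loT muR U * ArithmeticFunction.log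
    - (loT muR U * loT La U) * zeR + hiT La U * (hiT muR U * zeR) := by
  have h1 := lo_add_hi La U
  have h2 := lo_add_hi muR U
  have h3 := muR_zeR
  have h4 := La_zeR
  rw [← h2] at h3
  linear_combination (-1 + loT muR U * zeR) * h1 + loT muR U * h4 - hiT La U * h3

lemma abs_loT_muR (U n : ℕ) : |loT muR U n| ≤ 1 := by
  rw [loT_apply]; split_ifs
  · exact abs_muR n
  · simp

lemma abs_hiT_muR (U n : ℕ) : |hiT muR U n| ≤ 1 := by
  rw [hiT_apply]; split_ifs
  · simp
  · exact abs_muR n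

lemma g_bound (U n : ℕ) : |(hiT muR U * zeR) n| ≤ #n.divisors := by
  rw [ArithmeticFunction.mul_apply, card_divisors_eq]
  refine (abs_sum_le_sum_abs _ _).trans (sum_le_sum fun x hx => ?_)
  rw [Nat.mem_divisorsAntidiagonal] at hx
  have : x.2 ≠ 0 := by rintro h; rw [h, mul_zero] at hx; exact hx.2 hx.1.symm
  rw [zeR_apply this, mul_one]
  exact abs_hiT_muR _ _

lemma g_zero (U n : ℕ) (h : n ≤ U) : (hiT muR U * zeR) n = 0 := by
  rw [ArithmeticFunction.mul_apply]
  refine sum_eq_zero fun x hx => ?_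
  rw [Nat.mem_divisorsAntidiagonal] at hx
  have h1 : x.1 ∣ n := ⟨x.2, hx.1.symm⟩
  have h2 := Nat.le_of_dvd (Nat.pos_of_ne_zero hx.2) h1
  rw [hiT_apply, if_pos (by omega), zero_mul]

lemma c_bound (U n : ℕ) : |(loT muR U * loT La U) n| ≤ Real.log n := by
  have h := congrArg (fun f : ArithmeticFunction ℝ => f n) La_zeR
  simp only [ArithmeticFunction.log_apply] at h
  rw [← h, mul_comm La, ArithmeticFunction.mul_apply, ArithmeticFunction.mul_apply]
  refine (abs_sum_le_sum_abs _ _).trans (sum_le_sum fun x hx => ?_)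
  rw [Nat.mem_divisorsAntidiagonal] at hx
  have : x.1 ≠ 0 := by rintro h; rw [h, zero_mul] at hx; exact hx.2 hx.1.symm
  rw [zeR_apply this, abs_mul]
  refine mul_le_mul (abs_loT_muR _ _) ?_ (abs_nonneg _) zero_le_one
  have h0 : 0 ≤ La x.2 := ArithmeticFunction.vonMangoldt_nonneg
  rw [loT_apply]; split_ifs
  · rw [abs_of_nonneg h0]
  · simpa using h0

lemma c_zero (U n : ℕ) (h : U ^ 2 < n) : (loT muR U * loT La U) n = 0 := by
  rw [ArithmeticFunction.mul_apply]
  refine sum_eq_zero fun x hx => ?_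
  rw [Nat.mem_divisorsAntidiagonal] at hx
  rw [loT_apply, loT_apply]
  by_cases h1 : x.1 ≤ U
  · by_cases h2 : x.2 ≤ U
    · have := Nat.mul_le_mul h1 h2
      rw [hx.1] at this
      nlinarith
    · rw [if_neg h2, mul_zero]
  · rw [if_neg h1, zero_mul]

lemma La_le (N n : ℕ) (h : n ≤ N) : La n ≤ Real.log N :=
  ArithmeticFunction.vonMangoldt_le_log.trans (log_mono_nat h)

set_option maxHeartbeats 800000 in
lemma lambda_bound {α : ℝ} {a : ℤ} {q : ℕ} (hq : 1 ≤ q) (hg : Int.gcd a q = 1)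
    (hα : |α - (a : ℝ) / (q : ℝ)| ≤ 1 / (q : ℝ) ^ 2) (N : ℕ) (x b : ℝ)
    (hN : 2 ≤ N) (hqN : q ≤ N) (hx : 0 < x) (hxN : x ^ 5 = N)
    (hb0 : 0 ≤ b) (hb : 1 / q + 1 / x ^ 2 + q / N ≤ b ^ 2)
    (hb1 : 1 / q ≤ b) (hb2 : 1 / x ≤ b) (hb3 : q / N ≤ b) (M : ℕ) (hMN : M ≤ N) :
    ‖∑ n ∈ Ioc 0 M, (La n : ℂ) * eexp (α * (n : ℕ))‖ ≤ 1340 * N * Real.log N ^ 4 * b := by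
  obtain ⟨hl1, hl2, hl3⟩ := log_consts hN hq hqN
  have hN0 : (0 : ℝ) < N := by positivity
  have hq0 : (0 : ℝ) < q := by positivity
  set l := Real.log N with hl
  set U := ⌊x ^ 2⌋₊ with hU
  have hUle : (U : ℝ) ≤ x ^ 2 := Nat.floor_le (by positivity)
  have hUge : x ^ 2 ≤ U + 1 := (Nat.lt_floor_add_one _).le
  have hx1 : 1 ≤ x := by
    by_contra h
    push Not at h
    have h1 : x ^ 5 < 1 := pow_lt_one₀ hx.le h (by norm_num)
    have h2 : (2 : ℝ) ≤ N := by exact_mod_cast hN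
    linarith
  have hU1 : 1 ≤ U := Nat.le_floor (by push_cast; nlinarith)
  have hU2 : ((U ^ 2 : ℕ) : ℝ) ≤ N / x := by
    rw [le_div_iff₀ hx, ← hxN]
    push_cast
    have : (U : ℝ) ^ 2 ≤ (x ^ 2) ^ 2 := by gcongr
    nlinarith
  have hU2b : ((U ^ 2 : ℕ) : ℝ) ≤ N * b := by
    refine hU2.trans ?_
    have := mul_le_mul_of_nonneg_left hb2 hN0.le
    rwa [mul_one_div] at this
  have hU2N : U ^ 2 ≤ N := by
    have : ((U ^ 2 : ℕ) : ℝ) ≤ N := hU2.trans (div_le_self hN0.le hx1)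
    exact_mod_cast this
  have hUU2 : U ≤ U ^ 2 := by nlinarith
  have hUN : U ≤ N := hUU2.trans hU2N
  have hUU2' : (U : ℝ) ≤ ((U ^ 2 : ℕ) : ℝ) := by exact_mod_cast hUU2
  have hqb : (q : ℝ) ≤ N * b := by
    rw [div_le_iff₀ hN0] at hb3; linarith
  have hNqb : (N : ℝ) / q ≤ N * b := by
    have := mul_le_mul_of_nonneg_left hb1 hN0.le
    rwa [mul_one_div] at this
  set E : ℕ → ℂ := fun n => eexp (α * (n : ℕ)) with hE
  -- decomposition
  have hdec : ∑ n ∈ Ioc 0 M, (La n : ℂ) * E n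
      = ∑ n ∈ Ioc 0 M, (loT La U n : ℂ) * E n
        + ∑ n ∈ Ioc 0 M, ((loT muR U * ArithmeticFunction.log) n : ℂ) * E n
        - ∑ n ∈ Ioc 0 M, (((loT muR U * loT La U) * zeR) n : ℂ) * E n
        + ∑ n ∈ Ioc 0 M, ((hiT La U * (hiT muR U * zeR)) n : ℂ) * E n := by
    rw [← sum_add_distrib, ← sum_sub_distrib, ← sum_add_distrib]
    refine sum_congr rfl fun n _ => ?_
    have h := congrArg (fun f : ArithmeticFunction ℝ => f n) (vaughan U)
    simp only [sub_eq_add_neg, ArithmeticFunction.add_apply, ArithmeticFunction.neg_apply] at h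
    rw [h]
    push_cast
    ring
  have B1 : ‖∑ n ∈ Ioc 0 M, (loT La U n : ℂ) * E n‖ ≤ N * b * l := by
    calc _ ≤ ∑ n ∈ Ioc 0 M, ‖(loT La U n : ℂ) * E n‖ := norm_sum_le _ _
      _ ≤ ∑ n ∈ Ioc 0 M, if n ≤ U then l else 0 := by
        refine sum_le_sum fun n hn => ?_
        rw [norm_mul, norm_eexp, mul_one, Complex.norm_real, Real.norm_eq_abs, loT_apply]
        rw [mem_Ioc] at hn
        split_ifs
        · rw [abs_of_nonneg ArithmeticFunction.vonMangoldt_nonneg]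
          exact La_le N n (by omega)
        · simp
      _ = ∑ n ∈ Ioc 0 M with n ≤ U, l := by rw [sum_filter]
      _ ≤ ∑ n ∈ Ioc 0 U, l := by
        refine sum_le_sum_of_subset_of_nonneg ?_ (fun _ _ _ => by linarith)
        intro n hn
        simp only [mem_filter, mem_Ioc] at hn ⊢
        omega
      _ = U * l := by simp
      _ ≤ _ := by gcongr; linarith
  have B2 : ‖∑ n ∈ Ioc 0 M, ((loT muR U * ArithmeticFunction.log) n : ℂ) * E n‖
      ≤ (2 * l) * 1 * (32 * l * (q + U + N / q)) := by
    rw [sum_mul_rearrange]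
    exact typeI hq hg hα (loT muR U) (fun n => Real.log n) N U M (2 * l) 1 hN hqN hMN hUN
      (by linarith) zero_le_one (fun k _ => abs_loT_muR U k)
      (fun k hk => by rw [loT_apply, if_neg (by omega)])
      (fun θ n hn => log_weight1 θ N n hn) (fun θ n hn => log_weight2 θ N n hn)
  have B3 : ‖∑ n ∈ Ioc 0 M, (((loT muR U * loT La U) * zeR) n : ℂ) * E n‖
      ≤ 1 * l * (32 * l * (q + (U ^ 2 : ℕ) + N / q)) := by
    rw [sum_mul_rearrange]
    have e : ∀ u ∈ Ioc 0 M, ((loT muR U * loT La U) u : ℂ) *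
        ∑ m ∈ Ioc 0 (M / u), (zeR m : ℂ) * E (u * m)
        = ((loT muR U * loT La U) u : ℂ) *
        ∑ m ∈ Ioc 0 (M / u), ((1 : ℝ) : ℂ) * E (u * m) := by
      intro u _
      congr 1
      refine sum_congr rfl fun m hm => ?_
      rw [mem_Ioc] at hm
      rw [zeR_apply (by omega)]
    rw [sum_congr rfl e]
    exact typeI hq hg hα (fun k => (loT muR U * loT La U : ArithmeticFunction ℝ) k) (fun _ => 1) N (U ^ 2) M 1 l hN hqN hMN hU2N
      zero_lt_one (by linarith)
      (fun k hk => by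
        rw [mem_Ioc] at hk
        exact (c_bound U k).trans (log_mono_nat (by omega)))
      (fun k hk => c_zero U k hk)
      (fun θ n _ => one_weight1 θ n) (fun θ n _ => one_weight2 θ n)
  have B4 : ‖∑ n ∈ Ioc 0 M, ((hiT La U * (hiT muR U * zeR)) n : ℂ) * E n‖
      ≤ 180 * N * l ^ 4 * b := by
    rw [sum_mul_rearrange]
    exact typeII hq hg hα (hiT La U) (fun n => (hiT muR U * zeR : ArithmeticFunction ℝ) n) N U x b hN hqN hx hUge hb0 hb
      (fun u hu => by
        rw [hiT_apply]
        split_ifs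
        · simp only [abs_zero]; linarith
        · rw [abs_of_nonneg ArithmeticFunction.vonMangoldt_nonneg]
          exact La_le N u hu)
      (g_bound U) (fun u hu => by rw [hiT_apply, if_pos hu]) (g_zero U) M hMN
  rw [hdec]
  have htri : ∀ z1 z2 z3 z4 : ℂ, ‖z1 + z2 - z3 + z4‖ ≤ ‖z1‖ + ‖z2‖ + ‖z3‖ + ‖z4‖ := by
    intro z1 z2 z3 z4
    have h1 := norm_add_le (z1 + z2 - z3) z4
    have h2 := norm_sub_le (z1 + z2) z3
    have h3 := norm_add_le z1 z2
    linarith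
  refine (htri _ _ _ _).trans ?_
  have hP : 0 ≤ N * b := by positivity
  have hl4 : l ^ 2 ≤ 4 * l ^ 4 := by
    have h2 : (1 / 2 : ℝ) ^ 2 ≤ l ^ 2 := pow_le_pow_left₀ (by norm_num) (by linarith) 2
    have h3 := mul_le_mul_of_nonneg_left h2 (sq_nonneg l)
    have h4 : l ^ 4 = l ^ 2 * l ^ 2 := by ring
    linarith
  have hl5 : l ≤ 8 * l ^ 4 := by
    have h2 : (1 / 2 : ℝ) ^ 3 ≤ l ^ 3 := pow_le_pow_left₀ (by norm_num) (by linarith) 3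
    have h3 := mul_le_mul_of_nonneg_left h2 (show 0 ≤ l by linarith)
    have h4 : l ^ 4 = l * l ^ 3 := by ring
    linarith
  have B2' : (2 * l) * 1 * (32 * l * (q + U + N / q)) ≤ 768 * (N * b) * l ^ 4 := by
    calc _ = 64 * l ^ 2 * (q + U + N / q) := by ring
      _ ≤ 64 * (4 * l ^ 4) * (3 * (N * b)) := by gcongr; linarith
      _ = _ := by ring
  have B3' : 1 * l * (32 * l * (q + (U ^ 2 : ℕ) + N / q)) ≤ 384 * (N * b) * l ^ 4 := by
    calc _ = 32 * l ^ 2 * (q + (U ^ 2 : ℕ) + N / q) := by ring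
      _ ≤ 32 * (4 * l ^ 4) * (3 * (N * b)) := by gcongr; linarith
      _ = _ := by ring
  have B1' : N * b * l ≤ 8 * (N * b) * l ^ 4 := by
    calc _ ≤ N * b * (8 * l ^ 4) := by gcongr
      _ = _ := by ring
  linarith

end MinorArc

namespace MinorArc
open Finset

/-- summand for the theta-type sum -/
noncomputable def zP (α : ℝ) (i : ℕ) : ℂ :=
  if i.Prime then (Real.log i : ℂ) * eexp (α * (i : ℕ)) else 0

lemma theta_bound {α : ℝ} {a : ℤ} {q : ℕ} (hq : 1 ≤ q) (hg : Int.gcd a q = 1)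
    (hα : |α - (a : ℝ) / (q : ℝ)| ≤ 1 / (q : ℝ) ^ 2) (N : ℕ) (x b : ℝ)
    (hN : 2 ≤ N) (hqN : q ≤ N) (hx : 0 < x) (hxN : x ^ 5 = N)
    (hb0 : 0 ≤ b) (hb : 1 / q + 1 / x ^ 2 + q / N ≤ b ^ 2)
    (hb1 : 1 / q ≤ b) (hb2 : 1 / x ≤ b) (hb3 : q / N ≤ b) (M : ℕ) (hMN : M ≤ N) :
    ‖∑ n ∈ Ioc 0 M, zP α n‖ ≤ 1356 * N * Real.log N ^ 4 * b := by
  have hL := lambda_bound hq hg hα N x b hN hqN hx hxN hb0 hb hb1 hb2 hb3 M hMN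
  obtain ⟨hl1, -, -⟩ := log_consts hN hq hqN
  have hN0 : (0 : ℝ) < N := by positivity
  have hN2 : (2 : ℝ) ≤ N := by exact_mod_cast hN
  have hx1 : 1 ≤ x := by
    by_contra h
    push Not at h
    have h1 : x ^ 5 < 1 := pow_lt_one₀ hx.le h (by norm_num)
    linarith
  have hP := Chebyshev.psi_sub_theta_le (x := (N : ℝ)) (by linarith)
  rw [Chebyshev.psi_sub_theta_eq_sum_not_prime, Nat.floor_natCast] at hP
  set l := Real.log N with hl
  have hdec : ∑ n ∈ Ioc 0 M, zP α n = ∑ n ∈ Ioc 0 M, (La n : ℂ) * eexp (α * (n : ℕ))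
      - ∑ n ∈ Ioc 0 M with ¬ n.Prime, (La n : ℂ) * eexp (α * (n : ℕ)) := by
    rw [sum_filter, ← sum_sub_distrib]
    refine sum_congr rfl fun n _ => ?_
    unfold zP
    by_cases h : n.Prime
    · simp [h, ArithmeticFunction.vonMangoldt_apply_prime h]
    · simp [h]
  have h2 : ‖∑ n ∈ Ioc 0 M with ¬ n.Prime, (La n : ℂ) * eexp (α * (n : ℕ))‖
      ≤ 2 * √(N : ℝ) * l := by
    refine le_trans ?_ hP
    calc _ ≤ ∑ n ∈ Ioc 0 M with ¬ n.Prime, ‖(La n : ℂ) * eexp (α * (n : ℕ))‖ := norm_sum_le _ _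
      _ = ∑ n ∈ Ioc 0 M with ¬ n.Prime, La n := by
        refine sum_congr rfl fun n _ => ?_
        rw [norm_mul, norm_eexp, mul_one, Complex.norm_real, Real.norm_eq_abs,
          abs_of_nonneg ArithmeticFunction.vonMangoldt_nonneg]
      _ ≤ _ := by
        refine sum_le_sum_of_subset_of_nonneg ?_
          (fun _ _ _ => ArithmeticFunction.vonMangoldt_nonneg)
        intro n hn
        simp only [mem_filter, mem_Ioc] at hn ⊢
        exact ⟨⟨hn.1.1, by omega⟩, hn.2⟩
  have hs : √(N : ℝ) ≤ N * b := by
    have h3 : √(N : ℝ) ≤ x ^ 4 := by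
      rw [Real.sqrt_le_left (by positivity), ← hxN, ← pow_mul]
      exact pow_le_pow_right₀ hx1 (by norm_num)
    have h4 : (N : ℝ) * (1 / x) = x ^ 4 := by
      rw [← hxN]; field_simp
    have := mul_le_mul_of_nonneg_left hb2 hN0.le
    linarith
  have hl5 : l ≤ 8 * l ^ 4 := by
    have h2 : (1 / 2 : ℝ) ^ 3 ≤ l ^ 3 := pow_le_pow_left₀ (by norm_num) (by linarith) 3
    have h3 := mul_le_mul_of_nonneg_left h2 (show 0 ≤ l by linarith)
    have h4 : l ^ 4 = l * l ^ 3 := by ring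
    linarith
  have h5 : 2 * √(N : ℝ) * l ≤ 2 * (N * b) * (8 * l ^ 4) := by
    have hl0 : 0 ≤ l := by linarith
    gcongr
  rw [hdec]
  refine (norm_sub_le _ _).trans ?_
  linarith

lemma S₁_eq (N : ℕ) (α : ℝ) :
    S₁ N α = ∑ i ∈ range (N + 1), ((1 / Real.log (max i 2 : ℕ) : ℝ) : ℂ) * zP α i := by
  unfold S₁
  rw [sum_filter]
  refine sum_congr rfl fun i _ => ?_
  unfold zP
  split_ifs with h
  · rw [max_eq_left h.two_le]
    have : Real.log i ≠ 0 := (Real.log_pos (by exact_mod_cast h.one_lt)).ne'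
    have h' : (Real.log i : ℂ) ≠ 0 := by exact_mod_cast this
    push_cast [-Complex.natCast_log]
    field_simp
  · simp

lemma S₁_trivial (N : ℕ) (α : ℝ) : ‖S₁ N α‖ ≤ N := by
  unfold S₁
  refine (norm_sum_le _ _).trans ?_
  simp only [norm_eexp, sum_const, nsmul_eq_mul, mul_one]
  have : #{p ∈ range (N + 1) | p.Prime} ≤ #(Ioc 0 N) := by
    refine card_le_card fun p hp => ?_
    simp only [mem_filter, mem_range, mem_Ioc] at hp ⊢
    exact ⟨hp.2.pos, by omega⟩
  rw [Nat.card_Ioc] at this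
  exact_mod_cast this

lemma S₁_bound {α : ℝ} {a : ℤ} {q : ℕ} (hq : 1 ≤ q) (hg : Int.gcd a q = 1)
    (hα : |α - (a : ℝ) / (q : ℝ)| ≤ 1 / (q : ℝ) ^ 2) (N : ℕ) (x b : ℝ)
    (hN : 2 ≤ N) (hqN : q ≤ N) (hx : 0 < x) (hxN : x ^ 5 = N)
    (hb0 : 0 ≤ b) (hb : 1 / q + 1 / x ^ 2 + q / N ≤ b ^ 2)
    (hb1 : 1 / q ≤ b) (hb2 : 1 / x ≤ b) (hb3 : q / N ≤ b) :
    ‖S₁ N α‖ ≤ 3000 * N * Real.log N ^ 4 * b := by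
  have hT := theta_bound hq hg hα N x b hN hqN hx hxN hb0 hb hb1 hb2 hb3
  have hl2 := Real.log_two_gt_d9
  have hP : 0 ≤ 1356 * N * Real.log N ^ 4 * b := (norm_nonneg _).trans (hT 0 (by omega))
  rw [S₁_eq]
  have key := abel_antitone (fun i => 1 / Real.log (max i 2 : ℕ)) (zP α)
    (1356 * N * Real.log N ^ 4 * b) N ?_ ?_ ?_
  · refine key.trans ?_
    have : 1 / Real.log (max 0 2 : ℕ) ≤ 2 := by
      norm_num
      rw [inv_le_comm₀ (by linarith) (by norm_num)]
      linarith
    have := mul_le_mul_of_nonneg_right this hP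
    have h0 : 0 ≤ N * Real.log N ^ 4 * b := by positivity
    linarith
  · intro i _
    have h1 : Real.log (2 : ℕ) ≤ Real.log (max i 2 : ℕ) := log_mono_nat (le_max_right _ _)
    have h2 : Real.log (max i 2 : ℕ) ≤ Real.log (max (i + 1) 2 : ℕ) := log_mono_nat (by omega)
    push_cast at h1
    exact one_div_le_one_div_of_le (by push_cast; linarith) h2
  · have := Real.log_natCast_nonneg (max N 2)
    positivity
  · intro m hm
    rcases m with _ | k
    · simpa using hP
    · have := hT k (by omega)
      convert this using 2
      rw [range_eq_Ico, sum_eq_sum_Ico_succ_bot (by omega)]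
      have : zP α 0 = 0 := by simp [zP, Nat.not_prime_zero]
      rw [this, zero_add]
      refine sum_congr ?_ fun _ _ => rfl
      ext i; simp only [mem_Ico, mem_Ioc]; omega

end MinorArc

theorem S₁_minor_arc_bound :
    ∃ C > (0 : ℝ), ∀ N : ℕ, 2 ≤ N → ∀ α : ℝ, ∀ a : ℤ, ∀ q : ℕ, 1 ≤ q →
      Int.gcd a q = 1 → |α - (a : ℝ) / (q : ℝ)| ≤ 1 / (q : ℝ) ^ 2 →
      ‖S₁ N α‖ ≤ C * (N : ℝ) * (Real.log N) ^ 4 *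
        ((q : ℝ) ^ (-(1 : ℝ) / 2) + (N : ℝ) ^ (-(1 : ℝ) / 5) +
          (q : ℝ) ^ ((1 : ℝ) / 2) * (N : ℝ) ^ (-(1 : ℝ) / 2)) := by
  refine ⟨3000, by norm_num, fun N hN α a q hq hg hα => ?_⟩
  have hN0 : (0 : ℝ) < N := by positivity
  have hq0 : (0 : ℝ) < q := by positivity
  have hq1 : (1 : ℝ) ≤ q := by exact_mod_cast hq
  set s := (q : ℝ) ^ (-(1 : ℝ) / 2) with hs
  set t := (N : ℝ) ^ (-(1 : ℝ) / 5) with ht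
  set r := (q : ℝ) ^ ((1 : ℝ) / 2) * (N : ℝ) ^ (-(1 : ℝ) / 2) with hr
  have hs0 : 0 < s := Real.rpow_pos_of_pos hq0 _
  have ht0 : 0 < t := Real.rpow_pos_of_pos hN0 _
  have hr0 : 0 < r := mul_pos (Real.rpow_pos_of_pos hq0 _) (Real.rpow_pos_of_pos hN0 _)
  have hs2 : s ^ 2 = 1 / q := by
    rw [hs, ← Real.rpow_natCast, ← Real.rpow_mul hq0.le]
    norm_num [Real.rpow_neg_one]
  have hr2 : r ^ 2 = q / N := by
    rw [hr, mul_pow, ← Real.rpow_natCast, ← Real.rpow_natCast, ← Real.rpow_mul hq0.le,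
      ← Real.rpow_mul hN0.le]
    norm_num [Real.rpow_neg_one]
    rfl
  have ht5 : (1 / t) ^ 5 = N := by
    rw [ht, div_pow, one_pow, ← Real.rpow_natCast, ← Real.rpow_mul hN0.le]
    norm_num [Real.rpow_neg_one]
  rcases le_or_gt q N with h | h
  · have hqN : (q : ℝ) ≤ N := by exact_mod_cast h
    have hs1 : s ≤ 1 := by
      rw [← pow_le_one_iff_of_nonneg hs0.le two_ne_zero, hs2, div_le_one hq0]; exact hq1
    have hr1 : r ≤ 1 := by
      rw [← pow_le_one_iff_of_nonneg hr0.le two_ne_zero, hr2, div_le_one hN0]; exact hqN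
    have e1 : 1 / (1 / t) = t := by field_simp
    have e2 : 1 / (1 / t) ^ 2 = t ^ 2 := by field_simp
    refine MinorArc.S₁_bound hq hg hα N (1 / t) (s + t + r) hN h (by positivity) ht5
      (by positivity) ?_ ?_ ?_ ?_
    · rw [← hs2, ← hr2, e2]
      nlinarith [mul_pos hs0 ht0, mul_pos hs0 hr0, mul_pos ht0 hr0]
    · rw [← hs2]; nlinarith
    · rw [e1]; linarith
    · rw [← hr2]; nlinarith
  · have hqN : (N : ℝ) ≤ q := by exact_mod_cast h.le
    have hr1 : 1 ≤ r := by
      rw [← one_le_pow_iff_of_nonneg hr0.le two_ne_zero, hr2, one_le_div hN0]; exact hqN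
    refine (MinorArc.S₁_trivial N α).trans ?_
    obtain ⟨hl, -, -⟩ := MinorArc.log_consts hN le_rfl (by omega : 1 ≤ N)
    have hl4 : (1 / 2 : ℝ) ^ 4 ≤ Real.log N ^ 4 := pow_le_pow_left₀ (by norm_num) hl 4
    calc (N : ℝ) ≤ 3000 * N * (1 / 2 : ℝ) ^ 4 * 1 := by norm_num; linarith
      _ ≤ _ := by gcongr; linarith
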